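/- Let D be the m×m difference matrix and r a positive integer. Then for every j ∈ {1,...,m}, the j-th largest singular value of D^{-r} satisfies (1/(3πr))^r·(m/j)^r ≤ σ_j(D^{-r}) ≤ (6r)^r·(m/j)^r. -/

import Mathlib

/-- The m×m lower bidiagonal difference matrix. -/
def Dmat (m : ℕ) : Matrix (Fin m) (Fin m) ℝ :=
  Matrix.of fun i j => if i = j then 1 else if (i : ℕ) = (j : ℕ) + 1 then -1 else 0

/-- The j-th largest singular value of a rectangular matrix, via the
Courant–Fischer max-min characterization. -/
noncomputable def singVal {m k : ℕ} (A : Matrix (Fin m) (Fin k) ℝ) (j : ℕ) : ℝ :=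
  ⨆ W : {W : Submodule ℝ (EuclideanSpace ℝ (Fin k)) // Module.finrank ℝ W = j},
    ⨅ v : {v : EuclideanSpace ℝ (Fin k) // v ∈ W.1 ∧ ‖v‖ = 1},
      ‖Matrix.toEuclideanLin A v.1‖

/-!
Identify a vector with the coefficients of a polynomial modulo `X ^ m`, so that `D` becomes
multiplication by `1 - X`.

*Upper bound.* If `y` vanishes at the last entry of every block of `L` consecutive indices, then
telescoping within the blocks and Cauchy–Schwarz give `‖y‖ ≤ L * ‖D y‖`. Asking this of
`D⁻¹ v, …, D⁻ʳ v` imposes at most `r * (m / L)` linear conditions on `v`, which is fewer than `j`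
for `L` slightly above `r * m / j`.

*Lower bound.* Let `B = 1 + X + ⋯ + X ^ (s - 1)` and take the `j`-dimensional space of combinations
of `j` disjoint translates of the discrete B-spline `B ^ (r + 1)`. Since `(1 - X) * B = 1 - X ^ s`,
the operator `D ^ r` turns `B ^ (r + 1)` into `(1 - X ^ s) ^ r * B`, which has norm at most
`2 ^ r * √s`, whereas `‖B ^ (r + 1)‖ ^ 2 ≥ s ^ (2 * r + 1) / (r + 1)` by Cauchy–Schwarz.
-/

open Finset Matrix Module Polynomial

section SingVal

variable {m k j : ℕ} {F : Type*} [AddCommGroup F] [Module ℝ F]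

lemma exists_mem_norm_eq_one_of_finrank_pos {E : Type*} [NormedAddCommGroup E] [NormedSpace ℝ E]
    {W : Submodule ℝ E} (hW : 0 < finrank ℝ W) : ∃ v ∈ W, ‖v‖ = 1 := by
  have : Nontrivial W := nontrivial_of_finrank_pos hW
  obtain ⟨v, hv⟩ := exists_norm_eq W zero_le_one
  exact ⟨v, v.2, hv⟩

lemma iInf_norm_toEuclideanLin_le (A : Matrix (Fin m) (Fin k) ℝ)
    {W : Submodule ℝ (EuclideanSpace ℝ (Fin k))} {v : EuclideanSpace ℝ (Fin k)} (hv : v ∈ W)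
    (hv1 : ‖v‖ = 1) :
    ⨅ u : {u : EuclideanSpace ℝ (Fin k) // u ∈ W ∧ ‖u‖ = 1}, ‖toEuclideanLin A u.1‖ ≤
      ‖toEuclideanLin A v‖ :=
  ciInf_le ⟨0, Set.forall_mem_range.2 fun _ => norm_nonneg _⟩
    (⟨v, hv, hv1⟩ : {u : EuclideanSpace ℝ (Fin k) // u ∈ W ∧ ‖u‖ = 1})

lemma le_singVal_of_forall_mem {A : Matrix (Fin m) (Fin k) ℝ} {C : ℝ}
    {W : Submodule ℝ (EuclideanSpace ℝ (Fin k))} (hj : 0 < j) (hW : finrank ℝ W = j)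
    (h : ∀ v ∈ W, C * ‖v‖ ≤ ‖toEuclideanLin A v‖) : C ≤ singVal A j := by
  have hbdd : BddAbove (Set.range fun U : {U : Submodule ℝ (EuclideanSpace ℝ (Fin k)) //
      finrank ℝ U = j} => ⨅ v : {v : EuclideanSpace ℝ (Fin k) // v ∈ U.1 ∧ ‖v‖ = 1},
      ‖toEuclideanLin A v.1‖) := by
    refine ⟨‖(toEuclideanLin A).toContinuousLinearMap‖, ?_⟩
    rintro _ ⟨⟨U, hU⟩, rfl⟩
    obtain ⟨v, hv, hv1⟩ := exists_mem_norm_eq_one_of_finrank_pos (hU ▸ hj)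
    exact (iInf_norm_toEuclideanLin_le A hv hv1).trans
      ((toEuclideanLin A).toContinuousLinearMap.unit_le_opNorm v hv1.le)
  obtain ⟨w, hw, hw1⟩ := exists_mem_norm_eq_one_of_finrank_pos (hW ▸ hj)
  have : Nonempty {v : EuclideanSpace ℝ (Fin k) // v ∈ W ∧ ‖v‖ = 1} := ⟨⟨w, hw, hw1⟩⟩
  have hinf : C ≤ ⨅ v : {v : EuclideanSpace ℝ (Fin k) // v ∈ W ∧ ‖v‖ = 1},
      ‖toEuclideanLin A v.1‖ :=
    le_ciInf fun v => by simpa [v.2.2] using h v v.2.1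
  exact hinf.trans (le_ciSup hbdd ⟨W, hW⟩)

lemma le_singVal_of_mul_eq_one {A B : Matrix (Fin m) (Fin m) ℝ} {C : ℝ} (hAB : A * B = 1)
    {T : F →ₗ[ℝ] EuclideanSpace ℝ (Fin m)} (hT : Function.Injective T) (hF : 0 < finrank ℝ F)
    (h : ∀ c, C * ‖toEuclideanLin B (T c)‖ ≤ ‖T c‖) : C ≤ singVal A (finrank ℝ F) := by
  have hinv : Function.LeftInverse (toEuclideanLin A) (toEuclideanLin B) := fun v => by
    rw [← LinearMap.comp_apply, ← toLpLin_mul_same, hAB, toLpLin_one, LinearMap.id_apply]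
  have hinj : Function.Injective (toEuclideanLin B ∘ₗ T) := hinv.injective.comp hT
  refine le_singVal_of_forall_mem hF (LinearMap.finrank_range_of_inj hinj) ?_
  rintro _ ⟨c, rfl⟩
  rw [LinearMap.comp_apply, hinv]
  exact h c

lemma singVal_le_of_forall_map_eq_zero [FiniteDimensional ℝ F] {A : Matrix (Fin m) (Fin k) ℝ}
    {C : ℝ} (hC : 0 ≤ C) (Φ : EuclideanSpace ℝ (Fin k) →ₗ[ℝ] F) (hΦ : finrank ℝ F < j)
    (h : ∀ v, Φ v = 0 → ‖toEuclideanLin A v‖ ≤ C * ‖v‖) : singVal A j ≤ C := by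
  refine Real.iSup_le (fun ⟨W, hW⟩ => ?_) hC
  have hker : 0 < finrank ℝ (LinearMap.ker (Φ ∘ₗ W.subtype)) := by
    have := LinearMap.finrank_range_add_finrank_ker (Φ ∘ₗ W.subtype)
    have := (LinearMap.range (Φ ∘ₗ W.subtype)).finrank_le
    omega
  obtain ⟨w, hw, hw1⟩ := exists_mem_norm_eq_one_of_finrank_pos hker
  calc _ ≤ ‖toEuclideanLin A w‖ := iInf_norm_toEuclideanLin_le A w.2 hw1
    _ ≤ C * ‖(w : EuclideanSpace ℝ (Fin k))‖ := h w hw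
    _ = C := by rw [← Submodule.coe_norm, hw1, mul_one]

lemma singVal_pow_le_pow_of_forall_map_eq_zero [FiniteDimensional ℝ F]
    {A : Matrix (Fin m) (Fin m) ℝ} {C : ℝ} (hC : 0 ≤ C) {r : ℕ}
    (Φ : EuclideanSpace ℝ (Fin m) →ₗ[ℝ] F) (hΦ : r * finrank ℝ F < j)
    (h : ∀ v, Φ v = 0 → ‖toEuclideanLin A v‖ ≤ C * ‖v‖) : singVal (A ^ r) j ≤ C ^ r := by
  let Ψ : EuclideanSpace ℝ (Fin m) →ₗ[ℝ] Fin r → F :=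
    LinearMap.pi fun i => Φ ∘ₗ toEuclideanLin (A ^ (i : ℕ))
  refine singVal_le_of_forall_map_eq_zero (pow_nonneg hC r) Ψ
    (by simpa [finrank_pi_fintype] using hΦ) fun v hv => ?_
  suffices ∀ i ≤ r, ‖toEuclideanLin (A ^ i) v‖ ≤ C ^ i * ‖v‖ from this r le_rfl
  intro i hi
  induction i with
  | zero => simp
  | succ i ih =>
    have hΦi : Φ (toEuclideanLin (A ^ i) v) = 0 := congrFun hv ⟨i, hi⟩
    calc ‖toEuclideanLin (A ^ (i + 1)) v‖ = ‖toEuclideanLin A (toEuclideanLin (A ^ i) v)‖ := by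
          rw [pow_succ', toLpLin_mul_same, LinearMap.comp_apply]
      _ ≤ C * ‖toEuclideanLin (A ^ i) v‖ := h _ hΦi
      _ ≤ C * (C ^ i * ‖v‖) := by gcongr; exact ih (by omega)
      _ = C ^ (i + 1) * ‖v‖ := by ring

end SingVal

section CoeffVec

variable {m l j : ℕ} {b p q : ℝ[X]}

/-- The first `m` coefficients of a polynomial as a Euclidean vector: `Polynomial.toFn`, with the
`ℓ²` norm on its codomain. -/
noncomputable def coeffVec (m : ℕ) : ℝ[X] →ₗ[ℝ] EuclideanSpace ℝ (Fin m) :=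
  (WithLp.linearEquiv 2 ℝ (Fin m → ℝ)).symm.toLinearMap ∘ₗ toFn m

@[simp]
lemma coeffVec_apply (p : ℝ[X]) (i : Fin m) : coeffVec m p i = p.coeff i := rfl

lemma coeffVec_surjective (m : ℕ) : Function.Surjective (coeffVec m) :=
  (WithLp.linearEquiv 2 ℝ (Fin m → ℝ)).symm.surjective.comp (surjective_toFn m)

lemma norm_coeffVec_sq (m : ℕ) (p : ℝ[X]) : ‖coeffVec m p‖ ^ 2 = ∑ n ∈ range m, p.coeff n ^ 2 := by
  simp [EuclideanSpace.norm_sq_eq, Finset.sum_range]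

lemma norm_coeffVec_X_pow_mul_le (m s : ℕ) (p : ℝ[X]) :
    ‖coeffVec m (X ^ s * p)‖ ≤ ‖coeffVec m p‖ := by
  refine le_of_sq_le_sq ?_ (norm_nonneg _)
  rw [norm_coeffVec_sq, norm_coeffVec_sq]
  calc ∑ n ∈ range m, (X ^ s * p).coeff n ^ 2
      ≤ ∑ n ∈ range (s + m), (X ^ s * p).coeff n ^ 2 :=
        sum_le_sum_of_subset_of_nonneg (range_subset_range.2 (by omega)) fun _ _ _ => sq_nonneg _
    _ = ∑ n ∈ range m, p.coeff n ^ 2 := by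
        rw [sum_range_add, sum_eq_zero, zero_add]
        · simp [add_comm s, coeff_X_pow_mul]
        · intro n hn
          simp [coeff_X_pow_mul', (mem_range.1 hn).not_ge]

lemma norm_coeffVec_one_sub_X_pow_pow_mul_le (m s r : ℕ) (p : ℝ[X]) :
    ‖coeffVec m ((1 - X ^ s) ^ r * p)‖ ≤ 2 ^ r * ‖coeffVec m p‖ := by
  induction r with
  | zero => simp
  | succ r ih =>
    set g := (1 - X ^ s) ^ r * p
    have hg : (1 - X ^ s) ^ (r + 1) * p = g - X ^ s * g := by ring
    calc ‖coeffVec m ((1 - X ^ s) ^ (r + 1) * p)‖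
        ≤ ‖coeffVec m g‖ + ‖coeffVec m (X ^ s * g)‖ := by rw [hg, map_sub]; exact norm_sub_le _ _
      _ ≤ 2 * ‖coeffVec m g‖ := by linarith [norm_coeffVec_X_pow_mul_le m s g]
      _ ≤ 2 ^ (r + 1) * ‖coeffVec m p‖ := by rw [pow_succ']; linarith

lemma sq_eval_one_le_mul_norm_coeffVec_sq (hp : p.natDegree < m) :
    p.eval 1 ^ 2 ≤ m * ‖coeffVec m p‖ ^ 2 := by
  simpa [eval_eq_sum_range' hp, norm_coeffVec_sq] using
    sq_sum_le_card_mul_sum_sq (s := range m) (f := p.coeff)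

lemma coeff_expand_mul_of_natDegree_lt (hb : b.natDegree < l) (q : ℝ[X]) (n : ℕ) {i : ℕ}
    (hi : i < l) : (expand ℝ l q * b).coeff (l * n + i) = q.coeff n * b.coeff i := by
  induction q using Polynomial.induction_on' with
  | add q₁ q₂ h₁ h₂ => rw [map_add, add_mul, coeff_add, h₁, h₂, coeff_add, add_mul]
  | monomial t a =>
    rw [expand_monomial, ← C_mul_X_pow_eq_monomial, mul_assoc, coeff_C_mul, coeff_X_pow_mul',
      coeff_monomial]
    rcases lt_trichotomy t n with h | rfl | h
    · have hblock : t * l + l ≤ l * n := by nlinarith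
      simp [h.ne, coeff_eq_zero_of_natDegree_lt (show b.natDegree < l * n + i - t * l by omega)]
    · simp [mul_comm]
    · have hblock : l * n + l ≤ t * l := by nlinarith
      simp [h.ne', show ¬t * l ≤ l * n + i by omega]

lemma sum_range_mul_eq_sum_sum {M : Type*} [AddCommMonoid M] (l j : ℕ) (f : ℕ → M) :
    ∑ n ∈ range (l * j), f n = ∑ q ∈ range j, ∑ i ∈ range l, f (l * q + i) := by
  induction j with
  | zero => simp
  | succ j ih => rw [sum_range_succ, ← ih, mul_add, mul_one, sum_range_add]

lemma norm_coeffVec_expand_mul (hb : b.natDegree < l) (hq : q.natDegree < j) (hm : l * j ≤ m) :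
    ‖coeffVec m (expand ℝ l q * b)‖ = ‖coeffVec j q‖ * ‖coeffVec l b‖ := by
  have hdeg : (expand ℝ l q * b).natDegree < l * j := by
    have := natDegree_mul_le (p := expand ℝ l q) (q := b)
    rw [natDegree_expand] at this
    nlinarith
  rw [← sq_eq_sq₀ (norm_nonneg _) (by positivity), mul_pow]
  simp only [norm_coeffVec_sq]
  calc ∑ n ∈ range m, (expand ℝ l q * b).coeff n ^ 2
      = ∑ n ∈ range (l * j), (expand ℝ l q * b).coeff n ^ 2 := by
        refine (sum_subset (range_subset_range.2 hm) fun n _ hn => ?_).symm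
        rw [coeff_eq_zero_of_natDegree_lt (hdeg.trans_le (by simpa using hn)), zero_pow two_ne_zero]
    _ = ∑ n ∈ range j, ∑ i ∈ range l, (q.coeff n * b.coeff i) ^ 2 := by
        rw [sum_range_mul_eq_sum_sum]
        refine sum_congr rfl fun n _ => sum_congr rfl fun i hi => ?_
        rw [coeff_expand_mul_of_natDegree_lt hb q n (mem_range.1 hi)]
    _ = _ := by simp_rw [mul_pow, sum_mul_sum]

end CoeffVec

section DifferenceMatrix

variable {m : ℕ}

lemma Dmat_apply (i k : Fin m) :
    Dmat m i k = (if k = i then 1 else 0) - if (k : ℕ) + 1 = i then 1 else 0 := by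
  rw [Dmat, of_apply]
  grind

lemma toEuclideanLin_Dmat_coeffVec (m : ℕ) (p : ℝ[X]) :
    toEuclideanLin (Dmat m) (coeffVec m p) = coeffVec m ((1 - X) * p) := by
  ext ⟨i, hi⟩
  have hcol (k : Fin m) : Dmat m ⟨i, hi⟩ k * p.coeff k =
      (if k = ⟨i, hi⟩ then p.coeff i else 0) - if (k : ℕ) + 1 = i then p.coeff k else 0 := by
    rw [Dmat_apply]
    grind
  simp only [toLpLin_apply, mulVec, dotProduct, coeffVec_apply, hcol,
    sum_sub_distrib, sum_ite_eq', mem_univ, if_true, sub_mul, one_mul, coeff_sub]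
  congr 1
  cases i with
  | zero => simp
  | succ i =>
    have hi' : i < m := by omega
    rw [coeff_X_mul, Fin.sum_univ_eq_sum_range fun k => if k + 1 = i + 1 then p.coeff k else 0]
    simp [hi']

lemma toEuclideanLin_Dmat_pow_coeffVec (m r : ℕ) (p : ℝ[X]) :
    toEuclideanLin (Dmat m ^ r) (coeffVec m p) = coeffVec m ((1 - X) ^ r * p) := by
  induction r with
  | zero => simp
  | succ r ih =>
    rw [pow_succ', toLpLin_mul_same, LinearMap.comp_apply, ih, toEuclideanLin_Dmat_coeffVec,
      pow_succ', mul_assoc]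

lemma isUnit_det_Dmat (m : ℕ) : IsUnit (Dmat m).det := by
  have hlower : (Dmat m).IsLowerTriangular := fun i k (hik : i < k) => by
    rw [Dmat_apply]
    grind
  simp [det_of_isLowerTriangular _ hlower, Dmat_apply]

lemma Dmat_inv_pow_mul_Dmat_pow (m r : ℕ) : (Dmat m)⁻¹ ^ r * Dmat m ^ r = 1 := by
  rw [inv_pow', nonsing_inv_mul]
  simpa [det_pow] using (isUnit_det_Dmat m).pow r

end DifferenceMatrix

section UpperBound

variable {m L : ℕ}

lemma sum_range_sq_le_of_forall_dvd_eq_zero (hL : 0 < L) {z : ℕ → ℝ}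
    (hz : ∀ n < m, L ∣ n → z n = 0) :
    ∑ n ∈ range m, z (n + 1) ^ 2 ≤ (L : ℝ) ^ 2 * ∑ n ∈ range m, (z (n + 1) - z n) ^ 2 := by
  have hblock : ∀ n ∈ range m, z (n + 1) ^ 2 ≤
      L * ∑ i ∈ range m with i ≤ n ∧ n < i + L, (z (i + 1) - z i) ^ 2 := by
    intro n hn
    rw [mem_range] at hn
    have hstart : L * (n / L) ≤ n := Nat.mul_div_le n L
    have hend : n < L * (n / L) + L := Nat.lt_mul_div_succ n hL
    calc z (n + 1) ^ 2 = (∑ i ∈ Ico (L * (n / L)) (n + 1), (z (i + 1) - z i)) ^ 2 := by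
          rw [sum_Ico_sub z (by omega : L * (n / L) ≤ n + 1),
            hz _ (by omega) (dvd_mul_right L _), sub_zero]
      _ ≤ (n + 1 - L * (n / L) : ℕ) *
            ∑ i ∈ Ico (L * (n / L)) (n + 1), (z (i + 1) - z i) ^ 2 := by
          rw [← Nat.card_Ico]
          exact sq_sum_le_card_mul_sum_sq
      _ ≤ _ := by
          gcongr
          · omega
          · intro i hi
            simp only [mem_Ico, mem_filter, mem_range] at hi ⊢
            omega
  calc ∑ n ∈ range m, z (n + 1) ^ 2
      ≤ ∑ n ∈ range m, L * ∑ i ∈ range m with i ≤ n ∧ n < i + L, (z (i + 1) - z i) ^ 2 :=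
        sum_le_sum hblock
    _ = L * ∑ i ∈ range m, #{n ∈ range m | i ≤ n ∧ n < i + L} * (z (i + 1) - z i) ^ 2 := by
        simp_rw [← mul_sum, sum_filter]
        rw [sum_comm]
        simp_rw [← sum_filter, sum_const, nsmul_eq_mul]
    _ ≤ L * ∑ i ∈ range m, L * (z (i + 1) - z i) ^ 2 := by
        gcongr with i
        calc #{n ∈ range m | i ≤ n ∧ n < i + L} ≤ #(Ico i (i + L)) :=
              card_le_card fun n hn => mem_Ico.2 (mem_filter.1 hn).2
          _ = L := by simp
    _ = _ := by rw [← mul_sum, sq, mul_assoc]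

lemma norm_le_mul_norm_toEuclideanLin_Dmat (hL : 0 < L) {y : EuclideanSpace ℝ (Fin m)}
    (hy : ∀ i : Fin m, L ∣ (i : ℕ) + 1 → y i = 0) :
    ‖y‖ ≤ L * ‖toEuclideanLin (Dmat m) y‖ := by
  obtain ⟨p, rfl⟩ := coeffVec_surjective m y
  have hz : ∀ n < m, L ∣ n → (X * p).coeff n = 0
    | 0, _, _ => by simp
    | n + 1, hn, hdvd => by simpa using hy ⟨n, by omega⟩ hdvd
  refine le_of_sq_le_sq ?_ (by positivity)
  rw [toEuclideanLin_Dmat_coeffVec, mul_pow, norm_coeffVec_sq, norm_coeffVec_sq]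
  simpa [sub_mul] using sum_range_sq_le_of_forall_dvd_eq_zero hL hz

lemma card_fin_dvd_succ_le (m L : ℕ) : Fintype.card {i : Fin m // L ∣ (i : ℕ) + 1} ≤ m / L := by
  rw [← Nat.card_multiples, Fintype.card_subtype]
  exact card_le_card_of_injOn (fun i => i) (by intro i; simp) Fin.val_injective.injOn

lemma singVal_Dmat_inv_pow_le_pow {r j : ℕ} (hL : 0 < L) (hLj : r * (m / L) < j) :
    singVal ((Dmat m)⁻¹ ^ r) j ≤ (L : ℝ) ^ r := by
  let Φ : EuclideanSpace ℝ (Fin m) →ₗ[ℝ] {i : Fin m // L ∣ (i : ℕ) + 1} → ℝ :=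
    LinearMap.pi fun i => EuclideanSpace.projₗ i.1 ∘ₗ toEuclideanLin (Dmat m)⁻¹
  refine singVal_pow_le_pow_of_forall_map_eq_zero L.cast_nonneg Φ ?_ fun v hv => ?_
  · rw [finrank_fintype_fun_eq_card]
    exact (Nat.mul_le_mul_left r (card_fin_dvd_succ_le m L)).trans_lt hLj
  · have hDv : toEuclideanLin (Dmat m) (toEuclideanLin (Dmat m)⁻¹ v) = v := by
      rw [← LinearMap.comp_apply, ← toLpLin_mul_same, mul_nonsing_inv _ (isUnit_det_Dmat m),
        toLpLin_one, LinearMap.id_apply]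
    simpa only [hDv] using norm_le_mul_norm_toEuclideanLin_Dmat hL
      (y := toEuclideanLin (Dmat m)⁻¹ v) fun i hi => congrFun hv ⟨i, hi⟩

lemma singVal_Dmat_inv_pow_le {r j : ℕ} (hr : 1 ≤ r) (hj : 1 ≤ j) (hjm : j ≤ m) :
    singVal ((Dmat m)⁻¹ ^ r) j ≤ (2 * r * (m / j : ℝ)) ^ r := by
  set L := r * m / j + 1
  have hL : r * m < L * j := by
    rw [mul_comm L]
    exact Nat.lt_mul_div_succ _ hj
  have hcount : r * (m / L) < j := by
    refine Nat.lt_of_mul_lt_mul_right (a := L) ?_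
    calc r * (m / L) * L = r * (m / L * L) := mul_assoc _ _ _
      _ ≤ r * m := by gcongr; exact Nat.div_mul_le_self m L
      _ < j * L := by rwa [mul_comm j]
  have hone : (1 : ℝ) ≤ r * m / j := by
    rw [one_le_div (by positivity)]
    exact_mod_cast hjm.trans (Nat.le_mul_of_pos_left m hr)
  have hLle : (L : ℝ) ≤ 2 * r * (m / j) := by
    calc (L : ℝ) ≤ r * m / j + 1 := by
          push_cast [L]
          gcongr
          exact_mod_cast Nat.cast_div_le (α := ℝ) (m := r * m) (n := j)
      _ ≤ r * m / j + r * m / j := by gcongr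
      _ = 2 * r * (m / j) := by ring
  exact (singVal_Dmat_inv_pow_le_pow (Nat.succ_pos _) hcount).trans (by gcongr)

end UpperBound

section LowerBound

variable {m r j s : ℕ}

lemma half_pow_le_singVal_Dmat_inv_pow (hj : 1 ≤ j) (hjm : j ≤ m) :
    (1 / 2 : ℝ) ^ r ≤ singVal ((Dmat m)⁻¹ ^ r) j := by
  obtain ⟨T, hT⟩ : ∃ T : (Fin j → ℝ) →ₗ[ℝ] EuclideanSpace ℝ (Fin m), Function.Injective T :=
    finrank_le_iff_exists_linearMap.1 (by simpa using hjm)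
  have h := le_singVal_of_mul_eq_one (C := (1 / 2) ^ r) (Dmat_inv_pow_mul_Dmat_pow m r) hT
    (by simpa using Nat.pos_of_ne_zero (by omega)) fun c => ?_
  · simpa using h
  obtain ⟨p, hp⟩ := coeffVec_surjective m (T c)
  have hnorm := norm_coeffVec_one_sub_X_pow_pow_mul_le m 1 r p
  rw [← hp, toEuclideanLin_Dmat_pow_coeffVec, one_div, inv_pow, inv_mul_le_iff₀ (by positivity)]
  simpa using hnorm

lemma le_singVal_Dmat_inv_pow_of_expand {l : ℕ} {b : ℝ[X]} {C : ℝ} (hj : 1 ≤ j) (hm : l * j ≤ m)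
    (hb : b.natDegree < l) (hb0 : coeffVec l b ≠ 0)
    (h : ∀ q : ℝ[X], q.natDegree < j → C * ‖coeffVec m ((1 - X) ^ r * (expand ℝ l q * b))‖ ≤
      ‖coeffVec m (expand ℝ l q * b)‖) :
    C ≤ singVal ((Dmat m)⁻¹ ^ r) j := by
  let T : (Fin j → ℝ) →ₗ[ℝ] EuclideanSpace ℝ (Fin m) :=
    coeffVec m ∘ₗ LinearMap.mulRight ℝ b ∘ₗ (expand ℝ l).toLinearMap ∘ₗ ofFn j
  have hTc (c : Fin j → ℝ) : T c = coeffVec m (expand ℝ l (ofFn j c) * b) := rfl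
  have hT : Function.Injective T := by
    refine (injective_iff_map_eq_zero T).2 fun c hc => ?_
    rw [hTc, ← norm_eq_zero, norm_coeffVec_expand_mul hb (ofFn_natDegree_lt hj c) hm, mul_eq_zero,
      or_iff_left (norm_ne_zero_iff.2 hb0), norm_eq_zero] at hc
    ext i
    simpa using congrArg (fun v => v i) hc
  have hC := le_singVal_of_mul_eq_one (C := C) (Dmat_inv_pow_mul_Dmat_pow m r) hT
    (by simpa using Nat.pos_of_ne_zero (by omega)) fun c => by
      rw [hTc, toEuclideanLin_Dmat_pow_coeffVec]
      exact h _ (ofFn_natDegree_lt hj c)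
  simpa using hC

lemma natDegree_geom_sum_lt (hs : 0 < s) : (∑ i ∈ range s, X ^ i : ℝ[X]).natDegree < s := by
  refine (natDegree_sum_le_of_forall_le (n := s - 1) _ _ fun i hi => ?_).trans_lt (by omega)
  rw [natDegree_X_pow]
  exact Nat.le_sub_one_of_lt (mem_range.1 hi)

lemma norm_coeffVec_geom_sum_sq {l : ℕ} (hsl : s ≤ l) :
    ‖coeffVec l (∑ i ∈ range s, X ^ i)‖ ^ 2 = s := by
  have hcoeff (n : ℕ) : (∑ i ∈ range s, X ^ i : ℝ[X]).coeff n ^ 2 = if n < s then 1 else 0 := by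
    simp [coeff_X_pow]
  simp_rw [norm_coeffVec_sq, hcoeff, ← sum_filter]
  have hfilter : {n ∈ range l | n < s} = range s := by grind
  simp [hfilter]

/-- The discrete B-spline of degree `r` and knot spacing `s`: the generating polynomial of the
`(r + 1)`-fold convolution power of the indicator of `{0, …, s - 1}`. -/
noncomputable def discreteBSpline (s r : ℕ) : ℝ[X] := (∑ i ∈ range s, X ^ i) ^ (r + 1)

lemma natDegree_discreteBSpline_lt (hs : 0 < s) (r : ℕ) :
    (discreteBSpline s r).natDegree < (r + 1) * s :=
  natDegree_pow_le.trans_lt (Nat.mul_lt_mul_of_pos_left (natDegree_geom_sum_lt hs) r.succ_pos)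

lemma one_sub_X_pow_mul_discreteBSpline (s r : ℕ) :
    (1 - X) ^ r * discreteBSpline s r = (1 - X ^ s) ^ r * ∑ i ∈ range s, X ^ i := by
  rw [discreteBSpline, pow_succ, ← mul_assoc, ← mul_pow, mul_neg_geom_sum]

lemma pow_le_mul_norm_coeffVec_discreteBSpline_sq (hs : 0 < s) (r : ℕ) :
    (s : ℝ) ^ (2 * r + 1) ≤ (r + 1) * ‖coeffVec ((r + 1) * s) (discreteBSpline s r)‖ ^ 2 := by
  have heval : (discreteBSpline s r).eval 1 = (s : ℝ) ^ (r + 1) := by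
    simp [discreteBSpline, eval_finsetSum]
  have h := sq_eval_one_le_mul_norm_coeffVec_sq (natDegree_discreteBSpline_lt hs r)
  rw [heval] at h
  push_cast at h
  refine le_of_mul_le_mul_right ?_ (show (0 : ℝ) < s by positivity)
  linear_combination h

lemma le_norm_coeffVec_discreteBSpline (hs : 0 < s) (r : ℕ) :
    (s / 3 : ℝ) ^ r * (2 ^ r * √s) ≤ ‖coeffVec ((r + 1) * s) (discreteBSpline s r)‖ := by
  have hr : (r + 1 : ℝ) * (4 / 9) ^ r ≤ 1 := by
    have : (r + 1 : ℝ) ≤ 2 ^ r := by exact_mod_cast Nat.lt_two_pow_self (n := r)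
    calc (r + 1 : ℝ) * (4 / 9) ^ r ≤ 2 ^ r * (4 / 9) ^ r := by gcongr
      _ = (8 / 9) ^ r := by rw [← mul_pow]; norm_num
      _ ≤ 1 := pow_le_one₀ (by norm_num) (by norm_num)
  refine le_of_sq_le_sq ?_ (norm_nonneg _)
  refine le_of_mul_le_mul_left ?_ (show (0 : ℝ) < r + 1 by positivity)
  calc (r + 1 : ℝ) * ((s / 3) ^ r * (2 ^ r * √s)) ^ 2
      = (r + 1) * (4 / 9) ^ r * s ^ (2 * r + 1) := by
        rw [← mul_assoc, ← mul_pow, mul_pow _ √_, Real.sq_sqrt s.cast_nonneg, pow_right_comm]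
        ring_nf
    _ ≤ s ^ (2 * r + 1) := mul_le_of_le_one_left (by positivity) hr
    _ ≤ _ := pow_le_mul_norm_coeffVec_discreteBSpline_sq hs r

lemma div_three_pow_le_singVal_Dmat_inv_pow (hj : 1 ≤ j) (hs : 0 < s) (hm : (r + 1) * s * j ≤ m) :
    (s / 3 : ℝ) ^ r ≤ singVal ((Dmat m)⁻¹ ^ r) j := by
  have hb := natDegree_discreteBSpline_lt hs r
  have hsl : s ≤ (r + 1) * s := Nat.le_mul_of_pos_left s r.succ_pos
  have hspline := le_norm_coeffVec_discreteBSpline hs r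
  have hb0 : coeffVec ((r + 1) * s) (discreteBSpline s r) ≠ 0 :=
    norm_pos_iff.1 (hspline.trans_lt' (by positivity))
  refine le_singVal_Dmat_inv_pow_of_expand hj hm hb hb0 fun q hq => ?_
  set B : ℝ[X] := ∑ i ∈ range s, X ^ i
  have hdiff : (1 - X) ^ r * (expand ℝ ((r + 1) * s) q * discreteBSpline s r) =
      (1 - X ^ s) ^ r * (expand ℝ ((r + 1) * s) q * B) := by
    rw [mul_left_comm, one_sub_X_pow_mul_discreteBSpline, mul_left_comm]
  have hB : ‖coeffVec ((r + 1) * s) B‖ = √s := by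
    rw [← norm_coeffVec_geom_sum_sq hsl, Real.sqrt_sq (norm_nonneg _)]
  calc (s / 3 : ℝ) ^ r *
        ‖coeffVec m ((1 - X) ^ r * (expand ℝ ((r + 1) * s) q * discreteBSpline s r))‖
      ≤ (s / 3) ^ r * (2 ^ r * ‖coeffVec m (expand ℝ ((r + 1) * s) q * B)‖) := by
        rw [hdiff]
        gcongr
        exact norm_coeffVec_one_sub_X_pow_pow_mul_le m s r _
    _ = ‖coeffVec j q‖ * ((s / 3) ^ r * (2 ^ r * √s)) := by
        rw [norm_coeffVec_expand_mul ((natDegree_geom_sum_lt hs).trans_le hsl) hq hm, hB]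
        ring
    _ ≤ ‖coeffVec j q‖ * ‖coeffVec ((r + 1) * s) (discreteBSpline s r)‖ := by gcongr
    _ = ‖coeffVec m (expand ℝ ((r + 1) * s) q * discreteBSpline s r)‖ :=
        (norm_coeffVec_expand_mul hb hq hm).symm

lemma le_singVal_Dmat_inv_pow (hr : 1 ≤ r) (hj : 1 ≤ j) (hjm : j ≤ m) :
    (1 / (9 * r) * (m / j : ℝ)) ^ r ≤ singVal ((Dmat m)⁻¹ ^ r) j := by
  have hx : 1 / (9 * r) * (m / j : ℝ) = m / (9 * (r * j)) := by field_simp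
  have hrj : (r + 1) * j ≤ 2 * (r * j) := by nlinarith
  set s := m / ((r + 1) * j)
  have hms : m < (r + 1) * j * (s + 1) := Nat.lt_mul_div_succ m (by positivity)
  rw [hx]
  rcases lt_or_ge s 2 with hs | hs
  · have hm : (m : ℝ) ≤ 4 * (r * j) := by
      have : m ≤ 4 * (r * j) := by nlinarith
      exact_mod_cast this
    refine (pow_le_pow_left₀ (by positivity) ?_ r).trans (half_pow_le_singVal_Dmat_inv_pow hj hjm)
    rw [div_le_iff₀ (by positivity)]
    linarith
  · have hm : (m : ℝ) ≤ 3 * (r * j) * s := by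
      have : m ≤ 3 * (r * j) * s := by nlinarith
      exact_mod_cast this
    have hfit : (r + 1) * s * j ≤ m := by
      calc (r + 1) * s * j = (r + 1) * j * s := mul_right_comm _ _ _
        _ ≤ m := Nat.mul_div_le m _
    refine (pow_le_pow_left₀ (by positivity) ?_ r).trans
      (div_three_pow_le_singVal_Dmat_inv_pow hj (by omega) hfit)
    rw [div_le_iff₀ (by positivity)]
    linarith

end LowerBound

/-- bounds on the singular values of D^{-r}. -/
theorem singVal_Dinv_pow_bounds (m r j : ℕ) (hr : 1 ≤ r) (hj1 : 1 ≤ j) (hjm : j ≤ m) :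
    (1 / (3 * Real.pi * r)) ^ r * ((m : ℝ) / j) ^ r ≤ singVal ((Dmat m)⁻¹ ^ r) j ∧
      singVal ((Dmat m)⁻¹ ^ r) j ≤ (6 * (r : ℝ)) ^ r * ((m : ℝ) / j) ^ r := by
  rw [← mul_pow, ← mul_pow]
  constructor
  · refine le_trans ?_ (le_singVal_Dmat_inv_pow hr hj1 hjm)
    gcongr
    linarith [Real.pi_gt_three]
  · refine (singVal_Dmat_inv_pow_le hr hj1 hjm).trans ?_
    gcongr
    norm_num
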